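/- arXiv:1612.08853 — 3 statements merged into one kernel-verified Lean document; each statement's English description precedes it below -/
import Mathlib

section
/- Let M be a connected oriented smooth n-manifold (n ≥ 2) with volume form ω and let ξ be a smooth vector field on M such that the vector field (div_ω ξ)·ξ has compact support in M. If L_ξ(div_ω ξ) ≥ 0 everywhere on M (the logarithmic rate of volumetric expansion is nondecreasing along trajectories of the flow of ξ), then div_ω ξ = 0 identically on M, i.e. the flow is incompressible and L_ξ ω = 0. -/
open Manifold MeasureTheory

noncomputable section

/-- The Lie derivative of a real-valued function `f` along a vector field `ξ`:
`(L_ξ f)(x) = df_x(ξ x)`. -/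
def lieDerivFun {n : ℕ} {M : Type*} [TopologicalSpace M]
    [ChartedSpace (EuclideanSpace ℝ (Fin n)) M]
    (ξ : (x : M) → TangentSpace (𝓡 n) x) (f : M → ℝ) (x : M) : ℝ :=
  mfderiv (𝓡 n) 𝓘(ℝ) f x (ξ x)

/-- A smooth vector field on a manifold, i.e. a smooth section of the tangent bundle. -/
def SmoothVectorField {n : ℕ} {M : Type*} [TopologicalSpace M]
    [ChartedSpace (EuclideanSpace ℝ (Fin n)) M] [IsManifold (𝓡 n) (⊤ : ℕ∞) M]
    (ξ : (x : M) → TangentSpace (𝓡 n) x) : Prop :=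
  ContMDiff (𝓡 n) (𝓡 n).tangent (⊤ : ℕ∞) (fun x => (⟨x, ξ x⟩ : TangentBundle (𝓡 n) M))

/-- `IsLieDerivCoeffOf μ ξ h c` encodes, distributionally with respect to the positive
measure `μ` induced by the volume form `ω`, the identity `L_ξ (h·ω) = c·ω` for the Lie
derivative along `ξ`: by integration by parts this holds iff
`∫ ((L_ξ f)·h + f·c) dμ = 0` for every compactly supported smooth test function `f`. -/
def IsLieDerivCoeffOf {n : ℕ} {M : Type*} [TopologicalSpace M]
    [ChartedSpace (EuclideanSpace ℝ (Fin n)) M] [IsManifold (𝓡 n) (⊤ : ℕ∞) M]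
    [MeasurableSpace M] (μ : Measure M)
    (ξ : (x : M) → TangentSpace (𝓡 n) x) (h c : M → ℝ) : Prop :=
  ∀ f : M → ℝ, ContMDiff (𝓡 n) 𝓘(ℝ) (⊤ : ℕ∞) f → HasCompactSupport f →
    ∫ x, (lieDerivFun ξ f x * h x + f x * c x) ∂μ = 0

/-- `IsDivergenceOf μ ξ d` says that `d` is the divergence of `ξ` with respect to the
volume form inducing the measure `μ`, i.e. the unique smooth function with `L_ξ ω = d·ω`. -/
def IsDivergenceOf {n : ℕ} {M : Type*} [TopologicalSpace M]
    [ChartedSpace (EuclideanSpace ℝ (Fin n)) M] [IsManifold (𝓡 n) (⊤ : ℕ∞) M]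
    [MeasurableSpace M] (μ : Measure M)
    (ξ : (x : M) → TangentSpace (𝓡 n) x) (d : M → ℝ) : Prop :=
  ContMDiff (𝓡 n) 𝓘(ℝ) (⊤ : ℕ∞) d ∧ IsLieDerivCoeffOf μ ξ (fun _ => (1 : ℝ)) d

/-- Smooth cutoff functions around compact sets. -/
theorem exists_cutoff_aux {n : ℕ} {M : Type*} [TopologicalSpace M] [T2Space M]
    [ChartedSpace (EuclideanSpace ℝ (Fin n)) M] [IsManifold (𝓡 n) (⊤ : ℕ∞) M]
    {K : Set M} (hK : IsCompact K) :
    ∃ χ : M → ℝ, ContMDiff (𝓡 n) 𝓘(ℝ) (⊤ : ℕ∞) χ ∧ HasCompactSupport χ ∧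
      (∀ x, 0 ≤ χ x) ∧ (∀ x, χ x ≤ 1) ∧ ∀ y ∈ K, χ =ᶠ[nhds y] fun _ => (1 : ℝ) := by
  refine hK.induction_on (p := fun K => ∃ χ : M → ℝ, ContMDiff (𝓡 n) 𝓘(ℝ) (⊤ : ℕ∞) χ ∧
      HasCompactSupport χ ∧
      (∀ x, 0 ≤ χ x) ∧ (∀ x, χ x ≤ 1) ∧ ∀ y ∈ K, χ =ᶠ[nhds y] fun _ => (1 : ℝ)) ?_ ?_ ?_ ?_
  · exact ⟨fun _ => 0, contMDiff_const, HasCompactSupport.zero, by simp, by simp, by simp⟩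
  · rintro s t hst ⟨χ, h1, h2, h3, h4, h5⟩
    exact ⟨χ, h1, h2, h3, h4, fun y hy => h5 y (hst hy)⟩
  · rintro s t ⟨a, a1, a2, a3, a4, a5⟩ ⟨b, b1, b2, b3, b4, b5⟩
    refine ⟨a + b - a * b, (a1.add b1).sub (a1.mul b1), ?_, ?_, ?_, ?_⟩
    · exact (a2.add b2).sub (a2.mul_right)
    · intro x
      simp only [Pi.sub_apply, Pi.add_apply, Pi.mul_apply]
      nlinarith [a3 x, a4 x, b3 x, b4 x]
    · intro x
      simp only [Pi.sub_apply, Pi.add_apply, Pi.mul_apply]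
      nlinarith [mul_nonneg (sub_nonneg.2 (a4 x)) (sub_nonneg.2 (b4 x))]
    · rintro y (hy | hy)
      · filter_upwards [a5 y hy] with z hz
        simp [hz]
      · filter_upwards [b5 y hy] with z hz
        simp [hz]
  · intro x _
    obtain ⟨ρ⟩ : Nonempty (SmoothBumpFunction (𝓡 n) x) := inferInstance
    refine ⟨{y | ρ =ᶠ[nhds y] fun _ => (1 : ℝ)}, ?_, ρ, ρ.contMDiff, ρ.hasCompactSupport,
      fun _ => ρ.nonneg, fun _ => ρ.le_one, fun y hy => hy⟩
    exact mem_nhdsWithin_of_mem_nhds ρ.eventuallyEq_one.eventuallyEq_nhds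

/-- Continuity of the Lie derivative of a smooth function along a smooth field. -/
theorem continuous_lieDerivFun_aux {n : ℕ} {M : Type*} [TopologicalSpace M]
    [ChartedSpace (EuclideanSpace ℝ (Fin n)) M] [IsManifold (𝓡 n) (⊤ : ℕ∞) M]
    {ξ : (x : M) → TangentSpace (𝓡 n) x} (hξ : SmoothVectorField ξ)
    {f : M → ℝ} (hf : ContMDiff (𝓡 n) 𝓘(ℝ) (⊤ : ℕ∞) f) :
    Continuous (lieDerivFun ξ f) := by
  have : IsManifold (𝓡 n) 1 M := IsManifold.of_le (n := (⊤ : ℕ∞)) (by exact_mod_cast le_top)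
  have h1 : Continuous (tangentMap (𝓡 n) 𝓘(ℝ) f) :=
    hf.continuous_tangentMap (by simp)
  have h2 := (tangentBundleModelSpaceHomeomorph 𝓘(ℝ)).continuous.comp
    (h1.comp hξ.continuous)
  exact continuous_snd.comp h2

/-- On a connected oriented smooth `n`-manifold (`n ≥ 2`) with volume
form `ω`, if the vector field `(div_ω ξ)·ξ` has compact support and
`L_ξ(div_ω ξ) ≥ 0` everywhere, then `div_ω ξ = 0` identically: the flow is incompressible
and `L_ξ ω = 0`. -/
theorem stmt4
    {n : ℕ} (hn : 2 ≤ n)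
    {M : Type*} [TopologicalSpace M] [T2Space M]
    [ChartedSpace (EuclideanSpace ℝ (Fin n)) M] [IsManifold (𝓡 n) (⊤ : ℕ∞) M]
    [ConnectedSpace M] [MeasurableSpace M] [BorelSpace M]
    (ω : (x : M) → AlternatingMap ℝ (TangentSpace (𝓡 n) x) ℝ (Fin n))
    (hω : ∀ x, ω x ≠ 0)
    (μ : Measure M) [Measure.IsOpenPosMeasure μ] [IsFiniteMeasureOnCompacts μ]
    (ξ : (x : M) → TangentSpace (𝓡 n) x) (hξ : SmoothVectorField ξ)
    (d : M → ℝ) (hd : IsDivergenceOf μ ξ d)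
    (hsupp : IsCompact (closure {x : M | d x • ξ x ≠ 0}))
    (hmono : ∀ x, 0 ≤ lieDerivFun ξ d x) :
    ∀ x, d x = 0 := by
  intro x₀
  obtain ⟨hdS, hdiv⟩ := hd
  obtain ⟨χ, c1, c2, c3, c4, c5⟩ := exists_cutoff_aux (n := n)
    (hsupp.union (isCompact_singleton (x := x₀)))
  have hne : (⊤ : ℕ∞) ≠ 0 := by simp
  have hdd : ∀ x, MDifferentiableAt (𝓡 n) 𝓘(ℝ) d x := fun x =>
    (hdS x).mdifferentiableAt (by simp)
  have hcd : ∀ x, MDifferentiableAt (𝓡 n) 𝓘(ℝ) χ x := fun x =>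
    (c1 x).mdifferentiableAt (by simp)
  have hprod : ∀ x, lieDerivFun ξ (d * χ) x = χ x * lieDerivFun ξ d x := by
    intro x
    have e1 : lieDerivFun ξ (d * χ) x
        = d x * lieDerivFun ξ χ x + χ x * lieDerivFun ξ d x := by
      have := ((hdd x).hasMFDerivAt.mul (hcd x).hasMFDerivAt).mfderiv
      unfold lieDerivFun
      rw [this]
      rfl
    have e2 : d x * lieDerivFun ξ χ x = 0 := by
      by_cases hx : d x • ξ x = 0
      · have : d x * lieDerivFun ξ χ x = mfderiv (𝓡 n) 𝓘(ℝ) χ x (d x • ξ x) := by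
          rw [map_smul]; rfl
        rw [this, hx, map_zero]
        rfl
      · have := (c5 x (Or.inl (subset_closure hx))).mfderiv_eq (I := 𝓡 n) (I' := 𝓘(ℝ))
        unfold lieDerivFun
        rw [this, mfderiv_const]
        exact mul_zero _
    rw [e1, e2, zero_add]
  have hint := hdiv (d * χ) (hdS.mul c1) c2.mul_left
  have hfun : (fun x => lieDerivFun ξ (d * χ) x * (1 : ℝ) + (d * χ) x * d x)
      = χ * fun x => (lieDerivFun ξ d x + d x ^ 2) := by
    funext x
    simp only [hprod, Pi.mul_apply]
    ring
  rw [hfun] at hint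
  have hcont : Continuous (χ * fun x => (lieDerivFun ξ d x + d x ^ 2)) :=
    c1.continuous.mul ((continuous_lieDerivFun_aux hξ hdS).add (hdS.continuous.pow 2))
  have hnn : 0 ≤ (χ * fun x => (lieDerivFun ξ d x + d x ^ 2)) := fun x =>
    mul_nonneg (c3 x) (add_nonneg (hmono x) (sq_nonneg _))
  have hI : Integrable (χ * fun x => (lieDerivFun ξ d x + d x ^ 2)) μ :=
    hcont.integrable_of_hasCompactSupport c2.mul_right
  have hae := (integral_eq_zero_iff_of_nonneg hnn hI).1 hint
  have h0 := congrFun ((hcont.ae_eq_iff_eq μ continuous_zero).1 hae) x₀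
  have hχ : χ x₀ = 1 := (c5 x₀ (Or.inr rfl)).eq_of_nhds
  simp only [Pi.mul_apply, hχ, one_mul, Pi.zero_apply] at h0
  have h1 := hmono x₀
  have : d x₀ ^ 2 = 0 := le_antisymm (by linarith) (sq_nonneg _)
  exact pow_eq_zero_iff (two_ne_zero) |>.1 this
end
end

section
/- Let (M, g) be an n-dimensional Lorentzian manifold (n ≥ 3) and ξ a unit timelike smooth vector field on M (g(ξ,ξ) = −1) with compact support conditions so that the vector field (div ξ)·ξ is compactly supported. Then the rate of volumetric expansion of the flow generated by ξ cannot be strictly increasing along its trajectories: it is impossible that L_ξ(div ξ) + (div ξ)² > 0 everywhere on M, and if L_ξ(div ξ) + (div ξ)² ≥ 0 everywhere then it vanishes identically; in particular, if L_ξ(div ξ) ≥ 0 everywhere then div ξ = 0 identically. -/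
open Manifold MeasureTheory

noncomputable section

/-- A Lorentzian metric: a smooth symmetric field of bilinear forms on the tangent
spaces, of signature `(-,+,…,+)` (witnessed by a pseudo-orthonormal basis at each point). -/
def IsLorentzMetric {n : ℕ} {M : Type*} [TopologicalSpace M]
    [ChartedSpace (EuclideanSpace ℝ (Fin n)) M] [IsManifold (𝓡 n) (⊤ : ℕ∞) M]
    (g : (x : M) → TangentSpace (𝓡 n) x → TangentSpace (𝓡 n) x → ℝ) : Prop :=
  (∀ x w, IsLinearMap ℝ (fun v => g x v w)) ∧
  (∀ x v, IsLinearMap ℝ (fun w => g x v w)) ∧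
  (∀ x v w, g x v w = g x w v) ∧
  (∀ X Y : (x : M) → TangentSpace (𝓡 n) x, SmoothVectorField X → SmoothVectorField Y →
    ContMDiff (𝓡 n) 𝓘(ℝ) (⊤ : ℕ∞) (fun x => g x (X x) (Y x))) ∧
  (∀ x : M, ∃ b : Module.Basis (Fin n) ℝ (TangentSpace (𝓡 n) x),
    ∀ i j, g x (b i) (b j) = if i = j then (if (i : ℕ) = 0 then (-1:ℝ) else 1) else 0)

/-- On an `n`-dimensional Lorentzian manifold (`n ≥ 3`) with a unit
timelike smooth vector field `ξ` (`g(ξ,ξ) = -1`) such that `(div ξ)·ξ` is compactly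
supported: the rate of volumetric expansion of the flow of `ξ` cannot be strictly
increasing, i.e. it is impossible that `L_ξ(div ξ) + (div ξ)² > 0` everywhere; if
`L_ξ(div ξ) + (div ξ)² ≥ 0` everywhere then it vanishes identically; and if
`L_ξ(div ξ) ≥ 0` everywhere then `div ξ = 0` identically. -/
theorem stmt11
    {n : ℕ} (hn : 3 ≤ n)
    {M : Type*} [TopologicalSpace M] [T2Space M] [Nonempty M]
    [ChartedSpace (EuclideanSpace ℝ (Fin n)) M] [IsManifold (𝓡 n) (⊤ : ℕ∞) M]
    [MeasurableSpace M] [BorelSpace M]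
    (g : (x : M) → TangentSpace (𝓡 n) x → TangentSpace (𝓡 n) x → ℝ)
    (hg : IsLorentzMetric g)
    -- the canonical Lorentzian volume measure of `(M, g)`
    (μ : Measure M) [Measure.IsOpenPosMeasure μ] [IsFiniteMeasureOnCompacts μ]
    (ξ : (x : M) → TangentSpace (𝓡 n) x) (hξ : SmoothVectorField ξ)
    -- `ξ` is unit timelike
    (htime : ∀ x, g x (ξ x) (ξ x) = -1)
    (d : M → ℝ) (hd : IsDivergenceOf μ ξ d)
    -- the vector field `(div ξ)·ξ` is compactly supported
    (hsupp : IsCompact (closure {x : M | d x • ξ x ≠ 0})) :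
    (¬ ∀ x, 0 < lieDerivFun ξ d x + d x ^ 2) ∧
    ((∀ x, 0 ≤ lieDerivFun ξ d x + d x ^ 2) → ∀ x, lieDerivFun ξ d x + d x ^ 2 = 0) ∧
    ((∀ x, 0 ≤ lieDerivFun ξ d x) → ∀ x, d x = 0) := by
  obtain ⟨hlin, -, -, -, -⟩ := hg
  have hξ0 : ∀ x, ξ x ≠ 0 := by
    intro x hx
    have h1 := htime x
    have h2 := (hlin x (ξ x)).map_zero
    rw [hx] at h1 h2
    linarith
  have hds : HasCompactSupport d := by
    have : {x : M | d x • ξ x ≠ 0} = Function.support d := by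
      ext x
      simp [hξ0 x]
    rw [this] at hsupp
    exact hsupp
  obtain ⟨hdsm, hdiv⟩ := hd
  have hint := hdiv d hdsm hds
  have hcont : Continuous (lieDerivFun ξ d) := by
    have h1 : Continuous (tangentMap (𝓡 n) 𝓘(ℝ) d) :=
      hdsm.continuous_tangentMap (by simp)
    have h2 := (tangentBundleModelSpaceHomeomorph 𝓘(ℝ)).continuous.comp
      (h1.comp hξ.continuous)
    exact continuous_snd.comp h2
  have hF : Continuous (fun x => lieDerivFun ξ d x + d x ^ 2) :=
    hcont.add (hdsm.continuous.pow 2)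
  have hFint : ∫ x, (lieDerivFun ξ d x + d x ^ 2) ∂μ = 0 := by
    rw [← hint]
    congr 1
    ext x
    ring
  have hFs : HasCompactSupport (fun x => lieDerivFun ξ d x + d x ^ 2) := by
    refine HasCompactSupport.of_support_subset_isCompact hds ?_
    intro x hx
    by_contra hxs
    apply hx
    have hev : d =ᶠ[nhds x] fun _ => (0 : ℝ) := notMem_tsupport_iff_eventuallyEq.mp hxs
    have h3 : lieDerivFun ξ d x = 0 := by
      unfold lieDerivFun
      rw [hev.mfderiv_eq, mfderiv_const]
      rfl
    simp [h3, hev.eq_of_nhds]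
  have key : (∀ x, 0 ≤ lieDerivFun ξ d x + d x ^ 2) →
      ∀ x, lieDerivFun ξ d x + d x ^ 2 = 0 := by
    intro hnn x
    by_contra hx
    have := hF.integral_pos_of_hasCompactSupport_nonneg_nonzero (μ := μ) hFs hnn (x := x) hx
    linarith
  refine ⟨?_, key, ?_⟩
  · intro h
    obtain ⟨x⟩ := ‹Nonempty M›
    have := key (fun x => (h x).le) x
    linarith [h x]
  · intro h x
    have h1 := key (fun x => add_nonneg (h x) (sq_nonneg _)) x
    have h2 : d x ^ 2 = 0 := le_antisymm (by linarith [h x]) (sq_nonneg _)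
    exact pow_eq_zero_iff (two_ne_zero) |>.mp h2
end
end

section
/- Let (M, g) be a space-time (a connected four-dimensional oriented Lorentzian manifold), let M' be a closed oriented spacelike hypersurface in M bounding a compact four-dimensional oriented submanifold N ⊂ M (∂N = M'), and let ξ be a unit timelike smooth vector field on N which along M' equals the outward unit normal 𝒩 of M'. Then it is impossible that simultaneously: (1) L_ξ(div ξ) ≥ 0 at all points of N with L_ξ(div ξ) > 0 at some point of N, and (2) div ξ = 0 at all points of M'. -/
open Manifold MeasureTheory

noncomputable section

/-- The Lie derivative of a smooth function along a smooth vector field is continuous. -/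
theorem continuous_lieDerivFun {n : ℕ} {M : Type*} [TopologicalSpace M]
    [ChartedSpace (EuclideanSpace ℝ (Fin n)) M] [IsManifold (𝓡 n) (⊤ : ℕ∞) M]
    (ξ : (x : M) → TangentSpace (𝓡 n) x) (hξ : SmoothVectorField ξ)
    (d : M → ℝ) (hd : ContMDiff (𝓡 n) 𝓘(ℝ) (⊤ : ℕ∞) d) :
    Continuous (lieDerivFun ξ d) := by
  haveI : IsManifold (𝓡 n) 1 M := IsManifold.of_le (n := ((⊤ : ℕ∞) : WithTop ℕ∞)) (by simp)
  have h1 : Continuous (tangentMap (𝓡 n) 𝓘(ℝ) d) := hd.continuous_tangentMap (by simp)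
  have h2 := h1.comp hξ.continuous
  have h3 := (tangentBundleModelSpaceHomeomorph 𝓘(ℝ)).continuous.comp h2
  exact continuous_snd.comp h3

/-- Let `(M, g)` be a space-time, `M'` a closed oriented spacelike
hypersurface bounding a compact four-dimensional oriented submanifold `N ⊂ M`
(`∂N = M'`), and `ξ` a unit timelike smooth vector field on `N` equal along `M'` to the
outward unit normal `𝒩` of `M'`. Then it is impossible that simultaneously:
(1) `L_ξ(div ξ) ≥ 0` at all points of `N` with `L_ξ(div ξ) > 0` at some point of `N`, and
(2) `div ξ = 0` at all points of `M'`. -/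
theorem stmt17
    {M : Type*} [TopologicalSpace M] [T2Space M] [ConnectedSpace M]
    [ChartedSpace (EuclideanSpace ℝ (Fin 4)) M] [IsManifold (𝓡 4) (⊤ : ℕ∞) M]
    [MeasurableSpace M] [BorelSpace M]
    (g : (x : M) → TangentSpace (𝓡 4) x → TangentSpace (𝓡 4) x → ℝ)
    (hg : IsLorentzMetric g)
    -- the canonical Lorentzian volume measure of the space-time `(M, g)`
    (μ : Measure M) [Measure.IsOpenPosMeasure μ] [IsFiniteMeasureOnCompacts μ]
    -- `M'`: a spacelike hypersurface of `M`, realized by an embedding `ι : M' → M`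
    {M' : Type*} [TopologicalSpace M'] [T2Space M']
    [ChartedSpace (EuclideanSpace ℝ (Fin (3))) M'] [IsManifold (𝓡 (3)) (⊤ : ℕ∞) M']
    [MeasurableSpace M'] [BorelSpace M']
    (ι : M' → M) (hι : ContMDiff (𝓡 (3)) (𝓡 4) (⊤ : ℕ∞) ι)
    (hemb : Topology.IsEmbedding ι)
    (himm : ∀ x : M', Function.Injective (mfderiv (𝓡 (3)) (𝓡 4) ι x))
    -- `M'` is spacelike: the induced metric is positive definite
    (hspace : ∀ (x : M') (v : TangentSpace (𝓡 (3)) x), v ≠ 0 →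
      0 < g (ι x) (mfderiv (𝓡 (3)) (𝓡 4) ι x v) (mfderiv (𝓡 (3)) (𝓡 4) ι x v))
    -- `M'` is closed and bounds the compact four-dimensional submanifold `N`
    [CompactSpace M']
    (N : Set M) (hN : IsCompact N) (hbd : frontier N = Set.range ι)
    -- the induced volume measure on `M'` (oriented by the outward normal `𝒩`)
    (μ' : Measure M') [Measure.IsOpenPosMeasure μ'] [IsFiniteMeasureOnCompacts μ']
    -- `ξ`: a smooth vector field, unit timelike on `N`
    (ξ : (x : M) → TangentSpace (𝓡 4) x) (hξ : SmoothVectorField ξ)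
    (htime : ∀ y ∈ N, g y (ξ y) (ξ y) = -1)
    -- `𝒩`: the outward unit (imaginary) normal of `M'`, and `ξ = 𝒩` along `M'`
    (nrm : (x : M') → TangentSpace (𝓡 4) (ι x))
    (hnrmunit : ∀ x : M', g (ι x) (nrm x) (nrm x) = -1)
    (hnrmorth : ∀ (x : M') (v : TangentSpace (𝓡 3) x),
      g (ι x) (nrm x) (mfderiv (𝓡 3) (𝓡 4) ι x v) = 0)
    (hξnrm : ∀ x : M', ξ (ι x) = nrm x)
    -- `d = div ξ`
    (d : M → ℝ) (hd : IsDivergenceOf μ ξ d)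
    -- the divergence theorem on `N` applied to `(div ξ)·ξ` and to `ξ` (with `ξ` the
    -- outward normal along `M' = ∂N`)
    (hdivthm : ∫ y in N, (lieDerivFun ξ d y + d y ^ 2) ∂μ = ∫ x, d (ι x) ∂μ')
    (hvol : ∫ y in N, d y ∂μ = (μ' Set.univ).toReal) :
    ¬ ((∀ y ∈ N, 0 ≤ lieDerivFun ξ d y) ∧ (∃ y ∈ N, 0 < lieDerivFun ξ d y) ∧
        (∀ x : M', d (ι x) = 0)) := by
  rintro ⟨h0, ⟨y₀, hy₀, hpos⟩, hd0⟩
  have hLc : Continuous (lieDerivFun ξ d) := continuous_lieDerivFun ξ hξ d hd.1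
  have hdc : Continuous d := hd.1.continuous
  have hFc : Continuous (fun y => lieDerivFun ξ d y + d y ^ 2) := hLc.add (hdc.pow 2)
  have hint : IntegrableOn (fun y => lieDerivFun ξ d y + d y ^ 2) N μ :=
    hFc.continuousOn.integrableOn_compact hN
  have hz : ∫ y in N, (lieDerivFun ξ d y + d y ^ 2) ∂μ = 0 := by
    rw [hdivthm]; simp [hd0]
  have hNm : MeasurableSet N := hN.isClosed.measurableSet
  have hnn : ∀ᵐ y ∂(μ.restrict N), 0 ≤ lieDerivFun ξ d y + d y ^ 2 := by
    filter_upwards [ae_restrict_mem hNm] with y hy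
    have := h0 y hy
    positivity
  have hae := (integral_eq_zero_iff_of_nonneg_ae hnn hint).1 hz
  have hdz : ∫ y in N, d y ∂μ = 0 := by
    apply integral_eq_zero_of_ae
    filter_upwards [hae, ae_restrict_mem hNm] with y hy hyN
    have h1 := h0 y hyN
    simp only [Pi.zero_apply] at hy ⊢
    have h2 := sq_nonneg (d y)
    have h3 : d y ^ 2 = 0 := by linarith
    exact pow_eq_zero_iff (two_ne_zero) |>.1 h3
  have hemp : IsEmpty M' := by
    rw [hdz] at hvol
    have hfin : μ' Set.univ ≠ ⊤ := isCompact_univ.measure_ne_top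
    have h0' : μ' Set.univ = 0 := by
      rcases (ENNReal.toReal_eq_zero_iff _).1 hvol.symm with h | h
      · exact h
      · exact absurd h hfin
    exact Set.univ_eq_empty_iff.1 ((isOpen_univ.measure_eq_zero_iff μ').1 h0')
  have hfr : frontier N = ∅ := by rw [hbd]; exact Set.range_eq_empty ι
  have hcl : IsClopen N := isClopen_iff_frontier_eq_empty.2 hfr
  have huniv : N = Set.univ := hcl.eq_univ ⟨y₀, hy₀⟩
  rw [huniv, Measure.restrict_univ] at hae
  have heq := Measure.eq_of_ae_eq hae hFc continuous_const
  have h1 := congrFun heq y₀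
  simp only [Pi.zero_apply] at h1
  have h2 := sq_nonneg (d y₀)
  linarith
end
end
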